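/- Fix a rank n ≥ 1 and an integer 𝒥 ≥ 1. Let λ, μ, λ', μ' ∈ ℕ^n satisfy λ + λ' = μ + μ' componentwise, |λ| ≤ 𝒥 and |μ| ≤ 𝒥. Then C_𝒥(λ) · L^{λ,μ}_{λ',μ'}(x, -t^{𝒥} x) = ∑_{j, ℓ ∈ {0,…,n}^{𝒥} : m(j) = λ, m(ℓ) = μ} t^{-𝓘(rev(j))} · Π(j, ℓ; λ', μ'; x), as elements of ℤ[x][t, t^{-1}], where C_𝒥(λ) := ∑_{j ∈ {0,…,n}^{𝒥} : m(j) = λ} t^{-𝓘(rev(j))} and rev(j) := (j_𝒥,…,j_1). (Equivalently: the fused vertex weight of level 𝒥 equals the explicit weight L^{λ,μ}_{λ',μ'}(x,z) specialized at z = -t^{𝒥} x.) -/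

import Mathlib

/-!
Write `λ₀ = M - |λ|` and `μ₀ = M - |μ|`, so that `λ` and `μ` become the full contents, over the colours
`0, …, n`, of words of length `M`. Let `Z(λ, μ; I; x)` be the sum over pairs of words `(j, ℓ)` of
contents `(λ, μ)` of `t^{-𝓘(rev j)} Π(j, ℓ; I, K; x)`. Splitting off the first letters `(j, l)` of the two words
gives (`ZZ_succ`)

  `Z(λ, μ; I; x) = ∑_{l, j} t^{-(λ₀ + ⋯ + λ_{j-1})} L^{j,l}_I(x) Z(λ - e_j, μ - e_l; I + e_j - e_l; t x)`.

Put `(m)! = ∏_{i ≤ m} (1 - t^{-i})`. The claim that is proved by induction on `M` is (`ZZ_eq`)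

  `∏_a (λ_a)! · Z(λ, μ; I; x) = (M)! · L^{λ,μ}_{I,K}(x, -t^M x)`.

The special case `μ = I = 0` evaluates `C_M(λ)` as `(M)! / ∏_a (λ_a)!` (`qP_mul_sum`), and the theorem
follows by cancelling `∏_a (λ_a)!`, as `ℤ[x][t, t⁻¹]` is a domain.

For the induction step one needs, for each colour `l` separately, that the explicit weight satisfies
the recursion above up to the factor `t^{-(μ₀ + ⋯ + μ_{l-1})} (1 - t^{-μ_l})` (`FF_peel_word`); these factors
telescope to `1 - t^{-M}` when summed over `l` (`sum_telescope`). Note that `z = -t^M x` is unchanged when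
`(M, x)` is replaced by `(M - 1, t x)`.

The recursion is established for a free variable `z`. The sum over `κ` defining
`L^{λ,μ}_{λ',μ'}(x, z)` factorizes over colours, each factor being a one-colour sum `φ` (`phi`) whose arguments depend
on the colours below and above (`FF`, `LLmat_eq_FF`). The two contiguous relations `phi_shift` and
`phi_peel` for `φ`, which follow from the Pascal and absorption rules for Gaussian binomials, propagate
by induction on the number of colours to the relations `FF_shift` (the case `l = 0`) and `FF_peel`
(the case `l ≥ 1`), and the specialization `z = -t^M x` turns them into `FF_peel_word`.
-/

open Finset

noncomputable section

attribute [local instance] Classical.propDecidable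

/-- The Gaussian binomial coefficient `C(a,b)_t` for natural arguments,
as a polynomial in `t` (it vanishes when `b > a`). -/
def gaussNat : ℕ → ℕ → Polynomial ℤ
  | _, 0 => 1
  | 0, _ + 1 => 0
  | a + 1, b + 1 => gaussNat a b + Polynomial.X ^ (b + 1) * gaussNat a (b + 1)

/-- The Gaussian binomial coefficient `C(a,b)_t ∈ ℤ[t]`, set to `0` unless `a ≥ b ≥ 0`. -/
def gaussInt (a b : ℤ) : Polynomial ℤ :=
  if 0 ≤ b ∧ b ≤ a then gaussNat a.toNat b.toNat else 0

/-- The words in `{0,…,n}^M` with content `J`. -/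
def wrd (n M : ℕ) (J : ℕ → ℕ) : Finset (Fin M → ℕ) :=
  (Fintype.piFinset fun _ : Fin M => Finset.range (n + 1)).filter fun w =>
    ∀ a ∈ Finset.Icc 1 n, (Finset.univ.filter fun s => w s = a).card = J a

/-- The inversion number `𝓘(w) = #{(a,b) : a < b, w_a < w_b}`. -/
def invNum (M : ℕ) (w : Fin M → ℕ) : ℕ :=
  (Finset.univ.filter fun p : Fin M × Fin M => p.1 < p.2 ∧ w p.1 < w p.2).card

/-- The reversed word `rev(w) = (w_M, …, w_1)`. -/
def wrev (M : ℕ) (w : Fin M → ℕ) : Fin M → ℕ := fun s => w s.rev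

/-- The intermediate occupation vector `I^s = I + ∑_{r ≤ s} (e_{j_r} - e_{ℓ_r})`. -/
def Istep (M : ℕ) (I : ℕ → ℕ) (j l : Fin M → ℕ) (s a : ℕ) : ℤ :=
  (I a : ℤ) + ∑ r : Fin M,
    (if (r : ℕ) < s then
      ((if a = j r then 1 else 0) - (if a = l r then 1 else 0)) else 0)

/-- The vertex weight `L^{j,i}_{I,K}(x)`.  Here `tpow m` represents `t^m`. -/
def Lw {R : Type*} [CommRing R] (tpow : ℤ → R) (n : ℕ) (Ib It : ℕ → ℤ) (j i : ℕ)
    (xv : R) : R :=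
  if ∀ a ∈ Finset.Icc 1 n,
      Ib a + (if a = j then 1 else 0) = It a + (if a = i then 1 else 0) then
    if i = 0 then 1
    else if j = i then xv * tpow (∑ a ∈ Finset.Icc (i + 1) n, Ib a)
    else if j < i then xv * (1 - tpow (Ib i)) * tpow (∑ a ∈ Finset.Icc (i + 1) n, Ib a)
    else 0
  else 0

/-- `Π(j, ℓ; I, K; x) = ∏_{s=1}^M L^{j_s,ℓ_s}_{I^{s-1},I^s}(t^{s-1} x)`, which is `0`
unless every `I^s` lies in `ℕ^n` and `I^M = K`. -/
def Pprod {R : Type*} [CommRing R] (tpow : ℤ → R) (n M : ℕ) (j l : Fin M → ℕ)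
    (I K : ℕ → ℕ) (xv : R) : R :=
  if (∀ s ∈ Finset.range (M + 1), ∀ a ∈ Finset.Icc 1 n, 0 ≤ Istep M I j l s a) ∧
      (∀ a ∈ Finset.Icc 1 n, Istep M I j l M a = (K a : ℤ)) then
    ∏ s : Fin M,
      Lw tpow n (Istep M I j l s) (Istep M I j l ((s : ℕ) + 1)) (j s) (l s)
        (tpow (s : ℕ) * xv)
  else 0

/-- Accessor for a vector `κ ∈ ℕ^n`, with 1-based indices. -/
def kv (n : ℕ) (κ : Fin n → ℕ) (i : ℕ) : ℕ :=
  if h : i - 1 < n then κ ⟨i - 1, h⟩ else 0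

/-- The exponent of `t` in `L^{λ,μ}_{λ',μ'}(x,z)`. -/
def LLexpo (n : ℕ) (lam mu mu' : ℕ → ℕ) (κ : Fin n → ℕ) : ℤ :=
  (∑ i ∈ Finset.Icc 1 n, ((kv n κ i : ℤ) * kv n κ i - kv n κ i)) / 2 +
    ∑ j ∈ Finset.Icc 1 n, ∑ l ∈ Finset.Ico 1 j,
      ((mu l : ℤ) * ((mu' j : ℤ) + kv n κ j) - ((mu l : ℤ) - kv n κ l) * lam j)

/-- The explicit weight `L^{λ,μ}_{λ',μ'}(x,z)`. -/
def LLmat {R : Type*} [CommRing R] (tpow : ℤ → R) (gb : ℤ → ℤ → R) (n : ℕ)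
    (lam mu lam' mu' : ℕ → ℕ) (xv zv : R) : R :=
  ∑ κ ∈ Fintype.piFinset (fun i : Fin n => Finset.range (mu ((i : ℕ) + 1) + 1)),
    tpow (LLexpo n lam mu mu' κ) *
      (∏ i ∈ Finset.Icc 1 n,
        gb ((mu' i : ℤ) + kv n κ i) (kv n κ i) * gb (lam' i) ((mu i : ℤ) - kv n κ i)) *
      xv ^ (∑ i ∈ Finset.Icc 1 n, kv n κ i) *
      zv ^ ((∑ i ∈ Finset.Icc 1 n, mu i) - ∑ i ∈ Finset.Icc 1 n, kv n κ i)

/-- Embedding `ℤ[t] →+* ℤ[x][t,t⁻¹]`. -/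
def tEmbA : Polynomial ℤ →+* LaurentPolynomial (Polynomial ℤ) :=
  Polynomial.eval₂RingHom (Int.castRingHom (LaurentPolynomial (Polynomial ℤ)))
    (LaurentPolynomial.T 1)

/-- Gaussian binomials inside `ℤ[x][t,t⁻¹]`. -/
def gbA (a b : ℤ) : LaurentPolynomial (Polynomial ℤ) := tEmbA (gaussInt a b)

/-! ### Gaussian binomials in `ℤ[x][t, t⁻¹]` -/

/-- The ring `ℤ[x][t, t⁻¹]`. -/
abbrev LR := LaurentPolynomial (Polynomial ℤ)
local notation "𝐓" => (LaurentPolynomial.T : ℤ → LR)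

/-- The Gaussian binomial `C(a,b)_t` as an element of `ℤ[x][t, t⁻¹]`, for natural `a` and `b`. -/
def gN (a b : ℕ) : LR := tEmbA (gaussNat a b)

lemma tEmbA_X : tEmbA Polynomial.X = 𝐓 1 := by simp [tEmbA]

lemma gN_zero (a : ℕ) : gN a 0 = 1 := by cases a <;> simp [gN, gaussNat]

lemma gN_succ (a b : ℕ) : gN (a+1) (b+1) = gN a b + 𝐓 (b+1) * gN a (b+1) := by
  simp only [gN, gaussNat, map_add, map_mul, map_pow, tEmbA_X, LaurentPolynomial.T_pow]
  simp

lemma gN_eq_zero {a b : ℕ} (h : a < b) : gN a b = 0 := by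
  induction a generalizing b with
  | zero => obtain ⟨b, rfl⟩ : ∃ c, b = c + 1 := ⟨b - 1, by omega⟩
            simp [gN, gaussNat]
  | succ a ih =>
    obtain ⟨b, rfl⟩ : ∃ c, b = c + 1 := ⟨b - 1, by omega⟩
    rw [gN_succ, ih (by omega), ih (by omega)]; simp

lemma gN_absorb (a b : ℕ) : (1 - 𝐓 (b+1)) * gN a (b+1) = (1 - 𝐓 (a-b)) * gN a b := by
  induction a generalizing b with
  | zero =>
    rcases b with _ | b
    · rw [gN_eq_zero (by omega)]; simp
    · rw [gN_eq_zero (by omega), gN_eq_zero (by omega)]; simp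
  | succ a ih =>
    rcases b with _ | b
    · have h := ih 0
      rw [gN_succ]
      simp only [gN_zero] at *
      push_cast at *
      simp only [sub_zero] at *
      rw [LaurentPolynomial.T_add]
      linear_combination 𝐓 1 * h
    · rw [gN_succ, gN_succ]
      have h1 := ih b
      have h2 := ih (b+1)
      push_cast at *
      have e1 : 𝐓 ((a:ℤ) + 1 - (b+1)) = 𝐓 (a - b) := by congr 1; ring
      have e2 : 𝐓 ((a:ℤ) - b) = 𝐓 1 * 𝐓 (a-(b+1)) := by
        rw [← LaurentPolynomial.T_add]; congr 1; ring
      have e3 : 𝐓 ((b:ℤ)+1+1) = 𝐓 1 * 𝐓 (b+1) := by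
        rw [← LaurentPolynomial.T_add]; congr 1; ring
      rw [e1]
      rw [e2] at h1 ⊢
      rw [e3] at h2 ⊢
      linear_combination h1 + 𝐓 1 * 𝐓 (b+1) * h2

lemma gN_absorb' (a b : ℕ) : (1 - 𝐓 (b+1)) * gN (a+1) (b+1) = (1 - 𝐓 (a+1)) * gN a b := by
  have h := gN_absorb a b
  rw [gN_succ]
  have e2 : 𝐓 ((a:ℤ) + 1) = 𝐓 (b+1) * 𝐓 (a-b) := by
    rw [← LaurentPolynomial.T_add]; congr 1; ring
  rw [e2]
  linear_combination 𝐓 (b+1) * h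

lemma gN_top (a b : ℕ) : (1 - 𝐓 (a+1)) * gN a b = (1 - 𝐓 (a+1-b)) * gN (a+1) b := by
  rcases b with _ | b
  · simp [gN_zero]
  · have h := gN_absorb a b
    rw [gN_succ]
    push_cast
    have e2 : 𝐓 ((a:ℤ) + 1) = 𝐓 (b+1) * 𝐓 (a-b) := by
      rw [← LaurentPolynomial.T_add]; congr 1; ring
    have e1 : 𝐓 ((a:ℤ) + 1 - (b+1)) = 𝐓 (a - b) := by congr 1; ring
    rw [e2, e1]
    linear_combination h

/-! ### The one-colour sum -/

/-- The one-colour sum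
`φ_{K,I,m}(y, z) = ∑_{k + v = m} t^{k(k-1)/2} C(K + k, k)_t C(I, v)_t y^k z^v`. -/
def phi (K I m : ℕ) (y z : LR) : LR :=
  ∑ p ∈ antidiagonal m,
    𝐓 ((p.1.choose 2 : ℕ) : ℤ) * gN (K + p.1) p.1 * gN I p.2 * y ^ p.1 * z ^ p.2

lemma T_choose_succ (k : ℕ) :
    𝐓 (((k+1).choose 2 : ℕ) : ℤ) = 𝐓 (k:ℤ) * 𝐓 ((k.choose 2 : ℕ) : ℤ) := by
  rw [← LaurentPolynomial.T_add, Nat.choose_succ_succ' k 1]; simp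

lemma T_one_pow (k : ℕ) : (𝐓 1) ^ k = 𝐓 (k : ℤ) := by
  rw [LaurentPolynomial.T_pow]; simp

lemma phi_zero (K I : ℕ) (y z : LR) : phi K I 0 y z = 1 := by
  simp [phi, gN_zero]

lemma phi_smul (K I m : ℕ) (c y z : LR) : phi K I m (c * y) (c * z) = c ^ m * phi K I m y z := by
  simp only [phi, Finset.mul_sum]
  refine Finset.sum_congr rfl fun p hp => ?_
  rw [← Finset.HasAntidiagonal.mem_antidiagonal.1 hp, pow_add]; ring

/-- Contiguous relation lowering `m`. It is obtained by writing `1 - t^{m+1} = (1 - t^k) + t^k (1 - t^v)` in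
front of the term with `k + v = m + 1` and absorbing each part into the corresponding Gaussian
binomial; `l` plays the role of the number of incoming letters of the colour. -/
lemma phi_peel (K I m : ℕ) (y z : LR) (l : ℤ) (hl : l = m + 1 + K - I) :
    (1 - 𝐓 (m+1)) * phi K I (m+1) y z
      = (𝐓 l * y + z) * ((1 - 𝐓 I) * phi K (I-1) m (𝐓 1 * y) z)
        + (1 - 𝐓 l) * y * phi K I m (𝐓 1 * y) z := by
  have hsplit : (1 - 𝐓 (m+1)) * phi K I (m+1) y z =
      ∑ p ∈ antidiagonal (m+1), (1 - 𝐓 p.1) *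
        (𝐓 ((p.1.choose 2 : ℕ) : ℤ) * gN (K + p.1) p.1 * gN I p.2 * y ^ p.1 * z ^ p.2) +
      ∑ p ∈ antidiagonal (m+1), 𝐓 p.1 * (1 - 𝐓 p.2) *
        (𝐓 ((p.1.choose 2 : ℕ) : ℤ) * gN (K + p.1) p.1 * gN I p.2 * y ^ p.1 * z ^ p.2) := by
    rw [phi, Finset.mul_sum, ← Finset.sum_add_distrib]
    refine Finset.sum_congr rfl fun p hp => ?_
    have e : 𝐓 ((m:ℤ)+1) = 𝐓 p.1 * 𝐓 p.2 := by
      rw [← LaurentPolynomial.T_add]; congr 1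
      have := Finset.HasAntidiagonal.mem_antidiagonal.1 hp
      omega
    rw [e]; ring
  rw [hsplit, Finset.Nat.sum_antidiagonal_succ, Finset.Nat.sum_antidiagonal_succ']
  simp only [phi, Finset.mul_sum, ← Finset.sum_add_distrib]
  simp only [Nat.cast_zero, LaurentPolynomial.T_zero, sub_self, zero_mul, mul_zero, zero_add, add_zero]
  rw [← Finset.sum_add_distrib]
  refine Finset.sum_congr rfl fun p hp => ?_
  obtain ⟨k, v⟩ := p
  have hm := Finset.HasAntidiagonal.mem_antidiagonal.1 hp
  simp only at hm ⊢
  have h1 := gN_absorb' (K + k) k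
  have hI : (1 - 𝐓 I) * gN (I-1) v = (1 - 𝐓 (I - v)) * gN I v := by
    rcases I with _ | I
    · rcases v with _ | v
      · simp
      · rw [gN_eq_zero (by omega)]; simp
    · have := gN_top I v
      push_cast
      simpa using this
  have h2 := gN_absorb I v
  have e1 : 𝐓 ((K + k : ℕ) + 1) = 𝐓 l * 𝐓 (I - v) := by
    rw [← LaurentPolynomial.T_add]; congr 1; subst hl hm; push_cast; ring
  rw [e1] at h1
  rw [T_choose_succ, mul_pow, T_one_pow, ← Nat.add_assoc K k 1]
  push_cast
  set c := 𝐓 ((k.choose 2 : ℕ) : ℤ)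
  linear_combination (𝐓 k * c * y^(k+1) * z^v * gN I v) * h1
    + (𝐓 k * c * gN (K+k) k * y^k * z^(v+1)) * h2 -
      (𝐓 l * y + z) * c * gN (K+k) k * 𝐓 k * y^k * z^v * hI

/-- Contiguous relation replacing `y` by `t y` at fixed `m`. The coefficients of `y^{k+1} z^{v+1}` agree
by the absorption rule, once the factor `C(K + k, k)_t` common to all of them is taken out. -/
lemma phi_shift (K I m : ℕ) (y z : LR) (l : ℤ) (hl : l = m + K - I) :
    (𝐓 m * y + z) * phi K I m y z
      = (𝐓 l * y + z) * phi K I m (𝐓 1 * y) z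
        + (1 - 𝐓 l) * y * phi K (I+1) m (𝐓 1 * y) z := by
  rcases m with _ | m
  · simp [phi_zero]; ring
  have key : ∀ k v : ℕ, k + v = m → 𝐓 (m+1) * gN I (v+1) + (1 - 𝐓 (K+k+1)) * 𝐓 k * gN I v
      = 𝐓 l * 𝐓 k * gN I (v+1) + (1 - 𝐓 l) * 𝐓 k * gN (I+1) (v+1) := by
    intro k v h
    have h2 := gN_absorb I v
    rw [gN_succ]
    have e1 : 𝐓 ((m:ℤ)+1) = 𝐓 k * 𝐓 (v+1) := by
      rw [← LaurentPolynomial.T_add]; congr 1; subst h; push_cast; ring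
    have e2 : 𝐓 ((K:ℤ)+k+1) = 𝐓 l * 𝐓 (I - v) := by
      rw [← LaurentPolynomial.T_add]; congr 1; subst hl h; push_cast; ring
    rw [e1, e2]
    linear_combination (-𝐓 l * 𝐓 k) * h2
  -- The two sums are expanded in the monomials `y^{k+1} z^{v+1}` with `k + v = m`.
  have hA : z * (phi K I (m+1) y z - phi K I (m+1) (𝐓 1 * y) z) =
      ∑ p ∈ antidiagonal m, (1 - 𝐓 (K + p.1 + 1)) * 𝐓 p.1 * gN I p.2 *
        (𝐓 ((p.1.choose 2 : ℕ) : ℤ) * gN (K + p.1) p.1 * y^(p.1+1) * z ^ (p.2+1)) := by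
    rw [phi, phi, ← Finset.sum_sub_distrib, Finset.Nat.sum_antidiagonal_succ, mul_add, Finset.mul_sum]
    simp only [pow_zero, sub_self, mul_zero, zero_add]
    refine Finset.sum_congr rfl fun p hp => ?_
    obtain ⟨k, v⟩ := p
    have h1 := gN_absorb' (K + k) k
    rw [T_choose_succ, mul_pow, T_one_pow, ← Nat.add_assoc K k 1]
    push_cast at *
    set c := 𝐓 ((k.choose 2 : ℕ) : ℤ)
    linear_combination (𝐓 k * c * y^(k+1) * z^(v+1) * gN I v) * h1
  have hB : 𝐓 (m+1) * y * phi K I (m+1) y z - 𝐓 l * y * phi K I (m+1) (𝐓 1 * y) z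
     - (1 - 𝐓 l) * y * phi K (I+1) (m+1) (𝐓 1 * y) z =
      ∑ p ∈ antidiagonal m, (𝐓 (m+1) * gN I (p.2+1) - 𝐓 l * 𝐓 p.1 * gN I (p.2+1) - (1 - 𝐓 l) * 𝐓 p.1 * gN (I+1) (p.2+1)) *
        (𝐓 ((p.1.choose 2 : ℕ) : ℤ) * gN (K + p.1) p.1 * y^(p.1+1) * z ^ (p.2+1)) := by
    simp only [phi, Finset.mul_sum, ← Finset.sum_sub_distrib]
    rw [Finset.Nat.sum_antidiagonal_succ']
    simp only [gN_zero, mul_pow, T_one_pow]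
    push_cast
    rw [← zero_add (∑ p ∈ antidiagonal m, (_ : LR) * _)]
    congr 1
    · ring
    · refine Finset.sum_congr rfl fun p hp => ?_
      ring
  push_cast
  rw [← sub_eq_zero]
  have : ∀ a b c d : LR, a = b → c = d → b + d = 0 → a + c = 0 := by
    rintro _ b _ d rfl rfl h; exact h
  have hs := this _ _ _ _ hA hB (by
    rw [← Finset.sum_add_distrib]
    refine Finset.sum_eq_zero fun p hp => ?_
    have := key p.1 p.2 (Finset.HasAntidiagonal.mem_antidiagonal.1 hp)
    linear_combination (𝐓 ((p.1.choose 2 : ℕ) : ℤ) * gN (K + p.1) p.1 * y^(p.1+1) * z ^ (p.2+1)) * this)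
  linear_combination hs

/-! ### The explicit weight as a product over colours -/

/-- The unit vector `e_j`, with the coordinate of index `0` included. -/
def ev (j : ℕ) : ℕ → ℤ := fun a => if a = j then 1 else 0

lemma ev_same (j : ℕ) : ev j j = 1 := by simp [ev]
lemma ev_ne {j a : ℕ} (h : a ≠ j) : ev j a = 0 := by simp [ev, h]

lemma sum_ev_mem {s : Finset ℕ} {j : ℕ} (h : j ∈ s) : ∑ a ∈ s, ev j a = 1 := by
  simp [ev, h]

lemma sum_ev_not_mem {s : Finset ℕ} {j : ℕ} (h : j ∉ s) : ∑ a ∈ s, ev j a = 0 := by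
  simp [ev, h]

/-- `FF n λ μ I K x z` is the explicit weight `L^{λ,μ}_{I,K}(x, z)` in factorized form: the sum over the
top colour splits off as a one-colour sum, which leaves the weight for `n` colours with `z` rescaled by
`t^{-λ_{n+1}}`. The vectors are integer valued so that unit vectors can be subtracted freely, and
negative entries of `K`, `I` and `μ` are truncated to `0` in the Gaussian binomials. -/
def FF : ℕ → (ℕ → ℤ) → (ℕ → ℤ) → (ℕ → ℤ) → (ℕ → ℤ) → LR → LR → LR
  | 0, _, _, _, _, _, _ => 1
  | n + 1, lam, mu, I, K, x, z =>
    𝐓 ((∑ a ∈ Icc 1 n, mu a) * K (n + 1)) *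
      phi (K (n + 1)).toNat (I (n + 1)).toNat (mu (n + 1)).toNat (𝐓 (∑ a ∈ Icc 1 n, mu a) * x) z *
      FF n lam mu I K x (z * 𝐓 (-lam (n + 1)))

lemma FF_congr {n : ℕ} {lam lam' mu mu' I I' : ℕ → ℤ} (K : ℕ → ℤ) (x z : LR)
    (h : ∀ a, 1 ≤ a → a ≤ n → lam a = lam' a ∧ mu a = mu' a ∧ I a = I' a) :
    FF n lam mu I K x z = FF n lam' mu' I' K x z := by
  induction n generalizing z with
  | zero => rfl
  | succ n ih =>
    have hs : ∑ a ∈ Icc 1 n, mu a = ∑ a ∈ Icc 1 n, mu' a :=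
      Finset.sum_congr rfl fun a ha => by
        rw [Finset.mem_Icc] at ha
        exact (h a ha.1 (by omega)).2.1
    obtain ⟨h1, h2, h3⟩ := h (n+1) (by omega) le_rfl
    simp only [FF]
    rw [hs, h1, h2, h3, ih _ fun a ha hb => h a ha (by omega)]

lemma FF_step {n : ℕ} {lam mu I K lam' mu' I' : ℕ → ℤ} {L m i s : ℤ} (x z : LR)
    (hL : lam (n+1) = L) (hm : mu (n+1) = m) (hI : I (n+1) = i) (hs : ∑ a ∈ Icc 1 n, mu a = s)
    (h : ∀ a, 1 ≤ a → a ≤ n → lam a = lam' a ∧ mu a = mu' a ∧ I a = I' a) :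
    FF (n+1) lam mu I K x z = 𝐓 (s * K (n+1)) *
      phi (K (n + 1)).toNat i.toNat m.toNat (𝐓 s * x) z *
      FF n lam' mu' I' K x (z * 𝐓 (-L)) := by
  subst hL hm hI hs
  rw [FF, FF_congr K _ _ h]

/-- `FF` is homogeneous of degree `∑ μ_a` in `(x, z)`; stated for the scalar `t`. -/
lemma FF_smul {n : ℕ} (lam mu I K : ℕ → ℤ) (x z : LR) (h : ∀ a, 1 ≤ a → a ≤ n → 0 ≤ mu a) :
    FF n lam mu I K (𝐓 1 * x) (𝐓 1 * z) = 𝐓 (∑ a ∈ Icc 1 n, mu a) * FF n lam mu I K x z := by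
  induction n generalizing z with
  | zero => simp [FF]
  | succ n ih =>
    simp only [FF]
    rw [show 𝐓 (∑ a ∈ Icc 1 n, mu a) * (𝐓 1 * x) = 𝐓 1 * (𝐓 (∑ a ∈ Icc 1 n, mu a) * x) by ring,
      phi_smul, mul_assoc (𝐓 1) z, ih _ fun a ha hb => h a ha (by omega), T_one_pow,
      Int.toNat_of_nonneg (h _ (by omega) le_rfl), Finset.sum_Icc_succ_top (by omega),
      LaurentPolynomial.T_add]
    ring

lemma T_mul_neg (a : ℤ) : 𝐓 a * 𝐓 (-a) = 1 := by
  rw [← LaurentPolynomial.T_add]; simp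

/-- The recursion for the explicit weight at outgoing colour `0`, with `z` free. The induction step
combines `phi_shift` for the top colour with the relation for the lower colours at `z t^{-λ_{n+1}}`. -/
lemma FF_shift {n : ℕ} (lam mu I K : ℕ → ℤ) (x z : LR)
    (h : ∀ a, 1 ≤ a → a ≤ n → 0 ≤ mu a ∧ 0 ≤ I a ∧ 0 ≤ K a ∧ lam a + I a = mu a + K a) :
    (𝐓 (∑ a ∈ Icc 1 n, mu a) * x + z) * FF n lam mu I K x z =
      ∑ j ∈ Icc 1 n, (1 - 𝐓 (lam j)) * 𝐓 (∑ a ∈ Icc (j+1) n, lam a) * x *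
        FF n (lam - ev j) mu (I + ev j) K (𝐓 1 * x) z
      + (𝐓 (∑ a ∈ Icc 1 n, lam a) * x + z) * FF n lam mu I K (𝐓 1 * x) z := by
  induction n generalizing z with
  | zero => simp [FF]
  | succ n ih =>
    have IH := ih (z * 𝐓 (-lam (n+1))) fun a ha hb => h a ha (by omega)
    obtain ⟨hm, hI, hK, hc⟩ := h (n+1) (by omega) le_rfl
    have E := phi_shift (K (n+1)).toNat (I (n+1)).toNat (mu (n+1)).toNat
      (𝐓 (∑ a ∈ Icc 1 n, mu a) * x) z (lam (n+1)) (by omega)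
    rw [Int.toNat_of_nonneg hm] at E
    have hlow : ∑ j ∈ Icc 1 n, (1 - 𝐓 (lam j)) * 𝐓 (∑ a ∈ Icc (j+1) (n+1), lam a) * x *
        FF (n+1) (lam - ev j) mu (I + ev j) K (𝐓 1 * x) z =
        𝐓 (lam (n+1)) * (𝐓 ((∑ a ∈ Icc 1 n, mu a) * K (n + 1)) *
      phi (K (n + 1)).toNat (I (n + 1)).toNat (mu (n + 1)).toNat
        (𝐓 (∑ a ∈ Icc 1 n, mu a) * (𝐓 1 * x)) z) *
        ∑ j ∈ Icc 1 n, (1 - 𝐓 (lam j)) * 𝐓 (∑ a ∈ Icc (j+1) n, lam a) * x *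
        FF n (lam - ev j) mu (I + ev j) K (𝐓 1 * x) (z * 𝐓 (-lam (n+1))) := by
      rw [Finset.mul_sum]
      refine Finset.sum_congr rfl fun j hj => ?_
      rw [Finset.mem_Icc] at hj
      have hne : n + 1 ≠ j := by omega
      rw [FF_step (lam' := lam - ev j) (mu' := mu) (I' := I + ev j) (𝐓 1 * x) z (L := lam (n+1))
        (m := mu (n+1)) (i := I (n+1)) (by simp [ev_ne hne]) rfl (by simp [ev_ne hne]) rfl
        (fun _ _ _ => ⟨rfl, rfl, rfl⟩), Finset.sum_Icc_succ_top (by omega), LaurentPolynomial.T_add]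
      ring
    -- Subtracting `e_{n+1}` from `λ` multiplies the inner `z` by `t`, which homogeneity absorbs.
    have htop : FF (n+1) (lam - ev (n+1)) mu (I + ev (n+1)) K (𝐓 1 * x) z =
        𝐓 ((∑ a ∈ Icc 1 n, mu a) * K (n + 1)) *
      phi (K (n + 1)).toNat ((I (n + 1)).toNat + 1) (mu (n + 1)).toNat
        (𝐓 (∑ a ∈ Icc 1 n, mu a) * (𝐓 1 * x)) z *
        (𝐓 (∑ a ∈ Icc 1 n, mu a) * FF n lam mu I K x (z * 𝐓 (-lam (n+1)))) := by
      rw [FF_step (lam' := lam) (mu' := mu) (I' := I) (𝐓 1 * x) z (L := lam (n+1) - 1)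
        (m := mu (n+1)) (i := I (n+1) + 1) (by simp [ev_same]) rfl (by simp [ev_same]) rfl
        (fun a _ hb => by
          have hne : a ≠ n + 1 := by omega
          simp [ev_ne hne]), ← FF_smul _ _ _ _ _ _ fun a ha hb => (h a ha (by omega)).1]
      rw [show (I (n+1) + 1).toNat = (I (n+1)).toNat + 1 by omega,
        show -(lam (n+1) - 1) = 1 + -lam (n+1) by ring, LaurentPolynomial.T_add]
      congr 2
      ring
    rw [Finset.sum_Icc_succ_top (by omega : 1 ≤ n+1), Finset.sum_Icc_succ_top (by omega : 1 ≤ n+1),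
      Finset.sum_Icc_succ_top (by omega : 1 ≤ n+1), hlow, htop]
    rw [Finset.Icc_eq_empty (by omega : ¬ n+1+1 ≤ n+1)]
    simp only [FF, LaurentPolynomial.T_add, Finset.sum_empty, LaurentPolynomial.T_zero]
    set p := 𝐓 ((∑ a ∈ Icc 1 n, mu a) * K (n + 1))
    set S := 𝐓 (∑ a ∈ Icc 1 n, mu a)
    rw [show S * (𝐓 1 * x) = 𝐓 1 * (S * x) by ring]
    set Lm := 𝐓 (∑ a ∈ Icc 1 n, lam a)
    set F1 := FF n lam mu I K x (z * 𝐓 (-lam (n+1)))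
    set F2 := FF n lam mu I K (𝐓 1 * x) (z * 𝐓 (-lam (n+1)))
    have hT := T_mul_neg (lam (n+1))
    set P1 := phi (K (n + 1)).toNat ((I (n + 1)).toNat) (mu (n + 1)).toNat (𝐓 1 * (S * x)) z
    linear_combination p * F1 * E + p * P1 * 𝐓 (lam (n+1)) * IH + p * P1 * z * (F2 - F1) * hT

/-- The recursion for the explicit weight at outgoing colour `l ≥ 1`, with `z` free. For `l` the top colour
it combines `phi_peel` with `FF_shift` for the colours below; for smaller `l` the factor of the top colour
is common to all terms. -/
lemma FF_peel {n : ℕ} (lam mu I K : ℕ → ℤ) (x z : LR) (l : ℕ) (hl1 : 1 ≤ l) (hln : l ≤ n)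
    (hml : 1 ≤ mu l)
    (h : ∀ a, 1 ≤ a → a ≤ n → 0 ≤ mu a ∧ 0 ≤ I a ∧ 0 ≤ K a ∧ lam a + I a = mu a + K a) :
    (1 - 𝐓 (mu l)) * 𝐓 (∑ a ∈ Icc (l+1) n, mu a) * FF n lam mu I K x z =
      𝐓 (∑ a ∈ Icc (l+1) n, I a) * ((1 - 𝐓 (lam l)) * 𝐓 (∑ a ∈ Icc (l+1) n, lam a) * x *
          FF n (lam - ev l) (mu - ev l) I K (𝐓 1 * x) z
        + (1 - 𝐓 (I l)) * (∑ j ∈ Ico 1 l, (1 - 𝐓 (lam j)) * 𝐓 (∑ a ∈ Icc (j+1) n, lam a) * x *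
            FF n (lam - ev j) (mu - ev l) (I + ev j - ev l) K (𝐓 1 * x) z
          + (𝐓 (∑ a ∈ Icc 1 n, lam a) * x + z) *
            FF n lam (mu - ev l) (I - ev l) K (𝐓 1 * x) z)) := by
  induction n generalizing z with
  | zero => omega
  | succ n ih =>
    obtain ⟨hm, hI, hK, hc⟩ := h (n+1) (by omega) le_rfl
    have hT := T_mul_neg (lam (n+1))
    rcases Nat.lt_or_ge n l with hlt | hle
    · obtain rfl : l = n + 1 := by omega
      have A := FF_shift (n := n) lam mu I K x (z * 𝐓 (-lam (n+1))) fun a ha hb => h a ha (by omega)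
      have E := phi_peel (K (n+1)).toNat (I (n+1)).toNat (mu (n+1) - 1).toNat
        (𝐓 (∑ a ∈ Icc 1 n, mu a) * x) z (lam (n+1)) (by omega)
      rw [show (((mu (n+1) - 1).toNat : ℕ) : ℤ) + 1 = mu (n+1) by omega,
        show (mu (n+1) - 1).toNat + 1 = (mu (n+1)).toNat by omega, Int.toNat_of_nonneg hI] at E
      have hs : ∑ a ∈ Icc 1 n, (mu - ev (n+1)) a = ∑ a ∈ Icc 1 n, mu a := by
        refine Finset.sum_congr rfl fun a ha => ?_
        rw [Finset.mem_Icc] at ha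
        simp [ev_ne (show a ≠ n + 1 by omega)]
      have hlow : ∑ j ∈ Icc 1 n, (1 - 𝐓 (lam j)) * 𝐓 (∑ a ∈ Icc (j+1) (n+1), lam a) * x *
          FF (n+1) (lam - ev j) (mu - ev (n+1)) (I + ev j - ev (n+1)) K (𝐓 1 * x) z =
          𝐓 (lam (n+1)) * (𝐓 ((∑ a ∈ Icc 1 n, mu a) * K (n + 1)) *
        phi (K (n + 1)).toNat ((I (n + 1)).toNat - 1) (mu (n + 1) - 1).toNat
          (𝐓 (∑ a ∈ Icc 1 n, mu a) * (𝐓 1 * x)) z) *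
          ∑ j ∈ Icc 1 n, (1 - 𝐓 (lam j)) * 𝐓 (∑ a ∈ Icc (j+1) n, lam a) * x *
          FF n (lam - ev j) mu (I + ev j) K (𝐓 1 * x) (z * 𝐓 (-lam (n+1))) := by
        rw [Finset.mul_sum]
        refine Finset.sum_congr rfl fun j hj => ?_
        rw [Finset.mem_Icc] at hj
        have hne : n + 1 ≠ j := by omega
        rw [FF_step (lam' := lam - ev j) (mu' := mu) (I' := I + ev j) (𝐓 1 * x) z (L := lam (n+1))
          (m := mu (n+1) - 1) (i := I (n+1) - 1) (by simp [ev_ne hne]) (by simp [ev_same])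
          (by simp [ev_ne hne, ev_same]) hs
          (fun a _ hb => by
            have hne : a ≠ n + 1 := by omega
            simp [ev_ne hne]), Finset.sum_Icc_succ_top (by omega), LaurentPolynomial.T_add,
          show (I (n+1) - 1).toNat = (I (n+1)).toNat - 1 by omega]
        ring
      -- Subtracting `e_{n+1}` from `λ` multiplies the inner `z` by `t`, which homogeneity absorbs.
      have htop : FF (n+1) (lam - ev (n+1)) (mu - ev (n+1)) I K (𝐓 1 * x) z =
          𝐓 ((∑ a ∈ Icc 1 n, mu a) * K (n + 1)) *
        phi (K (n + 1)).toNat ((I (n + 1)).toNat) (mu (n + 1) - 1).toNat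
          (𝐓 (∑ a ∈ Icc 1 n, mu a) * (𝐓 1 * x)) z *
          (𝐓 (∑ a ∈ Icc 1 n, mu a) * FF n lam mu I K x (z * 𝐓 (-lam (n+1)))) := by
        rw [FF_step (lam' := lam) (mu' := mu) (I' := I) (𝐓 1 * x) z (L := lam (n+1) - 1)
          (m := mu (n+1) - 1) (i := I (n+1)) (by simp [ev_same]) (by simp [ev_same]) rfl hs
          (fun a _ hb => by
            have hne : a ≠ n + 1 := by omega
            simp [ev_ne hne]), ← FF_smul _ _ _ _ _ _ fun a ha hb => (h a ha (by omega)).1]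
        rw [show -(lam (n+1) - 1) = 1 + -lam (n+1) by ring, LaurentPolynomial.T_add]
        congr 2
        ring
      have hzero : FF (n+1) lam (mu - ev (n+1)) (I - ev (n+1)) K (𝐓 1 * x) z =
          𝐓 ((∑ a ∈ Icc 1 n, mu a) * K (n + 1)) *
        phi (K (n + 1)).toNat ((I (n + 1)).toNat - 1) (mu (n + 1) - 1).toNat
          (𝐓 (∑ a ∈ Icc 1 n, mu a) * (𝐓 1 * x)) z *
          FF n lam mu I K (𝐓 1 * x) (z * 𝐓 (-lam (n+1))) := by
        rw [FF_step (lam' := lam) (mu' := mu) (I' := I) (𝐓 1 * x) z (L := lam (n+1))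
          (m := mu (n+1) - 1) (i := I (n+1) - 1) rfl (by simp [ev_same]) (by simp [ev_same]) hs
          (fun a _ hb => by
            have hne : a ≠ n + 1 := by omega
            simp [ev_ne hne]), show (I (n+1) - 1).toNat = (I (n+1)).toNat - 1 by omega]
      rw [show Ico 1 (n+1) = Icc 1 n by ext; simp, hlow, htop, hzero,
        Finset.Icc_eq_empty (by omega : ¬ n+1+1 ≤ n+1)]
      rw [Finset.sum_Icc_succ_top (by omega : 1 ≤ n+1)]
      simp only [FF, LaurentPolynomial.T_add, Finset.sum_empty, LaurentPolynomial.T_zero]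
      set p := 𝐓 ((∑ a ∈ Icc 1 n, mu a) * K (n + 1))
      set S := 𝐓 (∑ a ∈ Icc 1 n, mu a)
      rw [show S * (𝐓 1 * x) = 𝐓 1 * (S * x) by ring]
      set Lm := 𝐓 (∑ a ∈ Icc 1 n, lam a)
      set F1 := FF n lam mu I K x (z * 𝐓 (-lam (n+1)))
      set F2 := FF n lam mu I K (𝐓 1 * x) (z * 𝐓 (-lam (n+1)))
      set P1 := phi (K (n + 1)).toNat ((I (n + 1)).toNat - 1) (mu (n + 1) - 1).toNat (𝐓 1 * (S * x)) z
      linear_combination p * F1 * E + p * P1 * (1 - 𝐓 (I (n+1))) * 𝐓 (lam (n+1)) * A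
        + p * P1 * (1 - 𝐓 (I (n+1))) * z * (F2 - F1) * hT
    · have IH := ih (z * 𝐓 (-lam (n+1))) hle fun a ha hb => h a ha (by omega)
      have hnl : n + 1 ≠ l := by omega
      have hs : ∑ a ∈ Icc 1 n, (mu - ev l) a = ∑ a ∈ Icc 1 n, mu a - 1 := by
        simp only [Pi.sub_apply, Finset.sum_sub_distrib]
        rw [sum_ev_mem (by simp; omega)]
      have hgen : ∀ lam' I' : ℕ → ℤ, lam' (n+1) = lam (n+1) → I' (n+1) = I (n+1) →
          FF (n+1) lam' (mu - ev l) I' K (𝐓 1 * x) z =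
          𝐓 ((∑ a ∈ Icc 1 n, mu a) * K (n+1)) * 𝐓 (- K (n+1)) *
            phi (K (n + 1)).toNat (I (n + 1)).toNat (mu (n + 1)).toNat
              (𝐓 (∑ a ∈ Icc 1 n, mu a) * x) z *
            FF n lam' (mu - ev l) I' K (𝐓 1 * x) (z * 𝐓 (-lam (n+1))) := by
        intro lam' I' h1 h2
        rw [FF_step (𝐓 1 * x) z h1 (show (mu - ev l) (n+1) = mu (n+1) by simp [ev_ne hnl]) h2 hs
          (fun a _ hb => ⟨rfl, rfl, rfl⟩), ← LaurentPolynomial.T_add, ← mul_assoc (𝐓 _) (𝐓 1) x,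
          ← LaurentPolynomial.T_add]
        congr 4 <;> ring_nf
      have hlow : ∑ j ∈ Ico 1 l, (1 - 𝐓 (lam j)) * 𝐓 (∑ a ∈ Icc (j+1) (n+1), lam a) * x *
          FF (n+1) (lam - ev j) (mu - ev l) (I + ev j - ev l) K (𝐓 1 * x) z =
          𝐓 (lam (n+1)) * (𝐓 ((∑ a ∈ Icc 1 n, mu a) * K (n+1)) * 𝐓 (- K (n+1)) *
            phi (K (n + 1)).toNat (I (n + 1)).toNat (mu (n + 1)).toNat
              (𝐓 (∑ a ∈ Icc 1 n, mu a) * x) z) *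
          ∑ j ∈ Ico 1 l, (1 - 𝐓 (lam j)) * 𝐓 (∑ a ∈ Icc (j+1) n, lam a) * x *
            FF n (lam - ev j) (mu - ev l) (I + ev j - ev l) K (𝐓 1 * x) (z * 𝐓 (-lam (n+1))) := by
        rw [Finset.mul_sum]
        refine Finset.sum_congr rfl fun j hj => ?_
        rw [Finset.mem_Ico] at hj
        have hne : n + 1 ≠ j := by omega
        rw [hgen _ _ (by simp [ev_ne hne]) (by simp [ev_ne hne, ev_ne hnl]),
          Finset.sum_Icc_succ_top (by omega), LaurentPolynomial.T_add]
        ring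
      rw [hlow, hgen _ _ (by simp [ev_ne hnl]) rfl, hgen _ _ rfl (by simp [ev_ne hnl])]
      rw [Finset.sum_Icc_succ_top (by omega : 1 ≤ n+1), Finset.sum_Icc_succ_top (by omega : l+1 ≤ n+1),
        Finset.sum_Icc_succ_top (by omega : l+1 ≤ n+1), Finset.sum_Icc_succ_top (by omega : l+1 ≤ n+1)]
      simp only [FF, LaurentPolynomial.T_add]
      have hmm : 𝐓 (mu (n+1)) = 𝐓 (I (n+1)) * 𝐓 (lam (n+1)) * 𝐓 (-K (n+1)) := by
        rw [← LaurentPolynomial.T_add, ← LaurentPolynomial.T_add]; congr 1; omega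
      rw [hmm]
      set p := 𝐓 ((∑ a ∈ Icc 1 n, mu a) * K (n + 1))
      set S := 𝐓 (∑ a ∈ Icc 1 n, mu a)
      set P1 := phi (K (n + 1)).toNat (I (n + 1)).toNat (mu (n + 1)).toNat (S * x) z
      set F2 := FF n lam (mu - ev l) (I - ev l) K (𝐓 1 * x) (z * 𝐓 (-lam (n+1)))
      linear_combination p * P1 * 𝐓 (I (n+1)) * 𝐓 (lam (n+1)) * 𝐓 (-K (n+1)) * IH +
        𝐓 (∑ a ∈ Icc (l+1) n, I a) * 𝐓 (I (n+1)) * (1 - 𝐓 (I l)) * z * p * 𝐓 (-K (n+1)) * P1 * F2 * hT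

/-! ### The recursion at `z = -t^M x` -/

/-- The vertex weight `L^{j,i}_{I,K}(x)` for `K = I + e_j - e_i`, the only `K` for which it can be nonzero. -/
def vw (n : ℕ) (I : ℕ → ℤ) (j i : ℕ) (x : LR) : LR :=
  if i = 0 then 1
  else if j = i then x * 𝐓 (∑ a ∈ Icc (i + 1) n, I a)
  else if j < i then x * (1 - 𝐓 (I i)) * 𝐓 (∑ a ∈ Icc (i + 1) n, I a)
  else 0

/-- The vertex weight vanishes when the vertex would make an occupation number negative. -/
lemma vw_nonneg {n : ℕ} {I : ℕ → ℤ} {j l : ℕ} {x : LR} (hv : vw n I j l x ≠ 0) {a : ℕ} (ha : 1 ≤ a)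
    (hI : 0 ≤ I a) : 0 ≤ (I + ev j - ev l) a := by
  have hj : 0 ≤ ev j a := by simp only [ev]; split_ifs <;> simp
  simp only [Pi.sub_apply, Pi.add_apply]
  by_cases hal : a = l
  · subst hal
    by_cases haj : a = j
    · subst haj; omega
    · rcases hI.eq_or_lt with h0 | h0
      · exfalso; apply hv
        rw [vw, if_neg (by omega), if_neg (by omega), ← h0]
        simp
      · rw [ev_same]; omega
  · rw [ev_ne hal]; omega

lemma sum_range_split (n j : ℕ) (hj : j ≤ n) (f : ℕ → ℤ) :
    ∑ a ∈ range (n+1), f a = ∑ a ∈ range j, f a + f j + ∑ a ∈ Icc (j+1) n, f a := by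
  rw [← Finset.sum_range_succ, ← Finset.sum_range_add_sum_Ico f (show j + 1 ≤ n + 1 by omega)]
  rfl

lemma sum_range_shift (n : ℕ) (f : ℕ → LR) : ∑ j ∈ range n, f (j+1) = ∑ j ∈ Icc 1 n, f j := by
  rw [Finset.range_eq_Ico, Finset.sum_Ico_add' f 0 n 1]
  rfl

/-- The coefficient attached to a first letter `j` in the recursion for words, rewritten in terms of the
colours above `j` as in `FF_shift` and `FF_peel`. -/
lemma coef_eq {n j : ℕ} (hj : j ≤ n) {lam : ℕ → ℤ} {M : ℤ} (hM : ∑ a ∈ range (n+1), lam a = M) :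
    𝐓 (-∑ a ∈ range j, lam a) * (1 - 𝐓 (-lam j)) =
      -𝐓 (-M) * ((1 - 𝐓 (lam j)) * 𝐓 (∑ a ∈ Icc (j+1) n, lam a)) := by
  rw [sum_range_split n j hj] at hM
  have e1 : 𝐓 (-∑ a ∈ range j, lam a) =
      𝐓 (-M) * 𝐓 (lam j) * 𝐓 (∑ a ∈ Icc (j+1) n, lam a) := by
    rw [← LaurentPolynomial.T_add, ← LaurentPolynomial.T_add]; congr 1; omega
  rw [e1]
  linear_combination (-𝐓 (-M) * 𝐓 (∑ a ∈ Icc (j+1) n, lam a)) * T_mul_neg (lam j)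

/-- At `z = -t^M x` the factor `t^{λ_1 + ⋯ + λ_n} x + z` of `FF_shift` and `FF_peel` becomes the
coefficient of the letter `0`. -/
lemma zero_term {n : ℕ} {lam : ℕ → ℤ} {M : ℤ} (hM : ∑ a ∈ range (n+1), lam a = M) (x : LR) :
    (1 - 𝐓 (lam 0)) * 𝐓 (∑ a ∈ Icc (0+1) n, lam a) * x =
      𝐓 (∑ a ∈ Icc 1 n, lam a) * x + -(𝐓 M * x) := by
  rw [sum_range_split n 0 (by omega)] at hM
  have : 𝐓 M = 𝐓 (lam 0) * 𝐓 (∑ a ∈ Icc 1 n, lam a) := by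
    rw [← LaurentPolynomial.T_add]; congr 1; simp at hM; omega
  rw [this]; simp only [zero_add]; ring

/-- Recursion for the explicit weight at `z = -t^M x` that matches splitting off the first letters `j`, `l` of
the two words, for a fixed outgoing letter `l`. The contents `λ` and `μ` include the colour `0`. -/
lemma FF_peel_word {n : ℕ} (lam mu I K : ℕ → ℤ) (x : LR) (hx : x ≠ 0) (M : ℤ) (l : ℕ) (hln : l ≤ n)
    (hml : 1 ≤ mu l) (hlam : ∑ a ∈ range (n+1), lam a = M) (hmu : ∑ a ∈ range (n+1), mu a = M)
    (h : ∀ a, 1 ≤ a → a ≤ n → 0 ≤ mu a ∧ 0 ≤ I a ∧ 0 ≤ K a ∧ lam a + I a = mu a + K a) :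
    ∑ j ∈ range (n+1), 𝐓 (-∑ a ∈ range j, lam a) * (1 - 𝐓 (-lam j)) * (vw n I j l x *
        FF n (lam - ev j) (mu - ev l) (I + ev j - ev l) K (𝐓 1 * x) (-(𝐓 M * x))) =
      𝐓 (-∑ a ∈ range l, mu a) * (1 - 𝐓 (-mu l)) * FF n lam mu I K x (-(𝐓 M * x)) := by
  set z := -(𝐓 M * x) with hz
  rw [coef_eq hln hmu]
  have h0 := zero_term hlam x
  rw [← hz] at h0
  rcases Nat.eq_zero_or_pos l with rfl | hl
  · have A := FF_shift lam mu I K x z h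
    have hmuz := zero_term hmu x
    rw [← hz] at hmuz
    -- `FF_shift` carries a common factor `x`, which is cancelled.
    apply mul_left_cancel₀ hx
    have hS : ∑ j ∈ range n, 𝐓 (-∑ a ∈ range (j+1), lam a) * (1 - 𝐓 (-lam (j+1))) * (vw n I (j+1) 0 x *
        FF n (lam - ev (j+1)) (mu - ev 0) (I + ev (j+1) - ev 0) K (𝐓 1 * x) z) =
        -𝐓 (-M) * ∑ j ∈ Icc 1 n, (1 - 𝐓 (lam j)) * 𝐓 (∑ a ∈ Icc (j+1) n, lam a) *
          FF n (lam - ev j) mu (I + ev j) K (𝐓 1 * x) z := by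
      rw [← sum_range_shift, Finset.mul_sum]
      refine Finset.sum_congr rfl fun j hj => ?_
      rw [Finset.mem_range] at hj
      rw [coef_eq (by omega) hlam,
        FF_congr (lam' := lam - ev (j+1)) (mu' := mu) (I' := I + ev (j+1)) K (𝐓 1 * x) z (fun a ha _ => by
          simp [ev_ne (show a ≠ 0 by omega)])]
      simp only [vw, if_true]
      ring
    rw [Finset.sum_range_succ', hS]
    · rw [coef_eq (by omega) hlam,
        FF_congr (lam' := lam) (mu' := mu) (I' := I) K (𝐓 1 * x) z (fun a ha _ => by
          simp [ev_ne (show a ≠ 0 by omega)])]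
      have : ∑ j ∈ Icc 1 n, (1 - 𝐓 (lam j)) * 𝐓 (∑ a ∈ Icc (j+1) n, lam a) * x *
        FF n (lam - ev j) mu (I + ev j) K (𝐓 1 * x) z = x * ∑ j ∈ Icc 1 n,
          ((1 - 𝐓 (lam j)) * 𝐓 (∑ a ∈ Icc (j+1) n, lam a) *
          FF n (lam - ev j) mu (I + ev j) K (𝐓 1 * x) z) := by
        rw [Finset.mul_sum]
        exact Finset.sum_congr rfl fun _ _ => by ring
      rw [this] at A
      simp only [vw, if_true]
      linear_combination 𝐓 (-M) * A + 𝐓 (-M) * FF n lam mu I K x z * hmuz -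
        𝐓 (-M) * FF n lam mu I K (𝐓 1 * x) z * h0
  · have B := FF_peel lam mu I K x z l hl hln hml h
    rw [← Finset.sum_subset (s₁ := range (l+1))
      (Finset.range_subset_range.2 (by omega))]
    · rw [Finset.sum_range_succ, Finset.range_eq_Ico, Finset.sum_eq_sum_Ico_succ_bot hl]
      have hS : ∑ j ∈ Ico (0+1) l, 𝐓 (-∑ a ∈ range j, lam a) * (1 - 𝐓 (-lam j)) * (vw n I j l x *
          FF n (lam - ev j) (mu - ev l) (I + ev j - ev l) K (𝐓 1 * x) z) =
          -𝐓 (-M) * 𝐓 (∑ a ∈ Icc (l+1) n, I a) * (1 - 𝐓 (I l)) *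
            ∑ j ∈ Ico 1 l, (1 - 𝐓 (lam j)) * 𝐓 (∑ a ∈ Icc (j+1) n, lam a) * x *
            FF n (lam - ev j) (mu - ev l) (I + ev j - ev l) K (𝐓 1 * x) z := by
        rw [Finset.mul_sum]
        refine Finset.sum_congr rfl fun j hj => ?_
        rw [Finset.mem_Ico] at hj
        rw [coef_eq (by omega) hlam, vw, if_neg (by omega), if_neg (by omega), if_pos hj.2]
        ring
      rw [hS, ← Finset.range_eq_Ico, coef_eq (by omega) hlam, coef_eq hln hlam,
        FF_congr (lam := lam - ev 0) (lam' := lam) (mu' := mu - ev l) (I' := I - ev l) K (𝐓 1 * x) z (fun a ha _ => by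
          simp [ev_ne (show a ≠ 0 by omega)]), add_sub_cancel_right,
          vw, if_neg (by omega), if_neg (by omega), if_pos hl, vw, if_neg (by omega), if_pos rfl]
      linear_combination 𝐓 (-M) * B - 𝐓 (-M) * 𝐓 (∑ a ∈ Icc (l+1) n, I a) * (1 - 𝐓 (I l)) *
        FF n lam (mu - ev l) (I - ev l) K (𝐓 1 * x) z * h0
    · intro j hj hj'
      rw [Finset.mem_range] at hj hj'
      rw [vw, if_neg (by omega), if_neg (by omega), if_neg (by omega)]
      simp

/-! ### Sums over pairs of words -/

/-- The words of length `M` in the letters `0, …, n`. -/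
def words (n M : ℕ) : Finset (Fin M → ℕ) := Fintype.piFinset fun _ : Fin M => range (n + 1)

/-- The number of letters `a` in the word `w`; the letter `0` is counted as well. -/
def cnt {M : ℕ} (w : Fin M → ℕ) (a : ℕ) : ℤ := ∑ s, ev (w s) a

lemma sum_words_succ (n M : ℕ) (f : (Fin (M+1) → ℕ) → LR) :
    ∑ w ∈ words n (M+1), f w = ∑ a ∈ range (n+1), ∑ w ∈ words n M, f (Fin.cons a w) := by
  rw [← Finset.sum_product']
  refine Finset.sum_nbij' (fun w => (w 0, Fin.tail w)) (fun p => Fin.cons p.1 p.2) ?_ ?_ ?_ ?_ ?_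
  · intro w hw
    simp only [words, Fintype.mem_piFinset, Finset.mem_product] at *
    exact ⟨hw 0, fun s => hw s.succ⟩
  · rintro ⟨a, w⟩ hw
    simp only [words, Fintype.mem_piFinset, Finset.mem_product] at *
    intro s
    refine Fin.cases ?_ (fun s => ?_) s
    · simpa using hw.1
    · simpa using hw.2 s
  · intro w _; simp
  · rintro ⟨a, w⟩ _; simp
  · intro w _; simp

lemma cnt_cons {M : ℕ} (a : ℕ) (w : Fin M → ℕ) :
    cnt (Fin.cons a w : Fin (M+1) → ℕ) = ev a + cnt w := by
  funext b
  simp [cnt, Fin.sum_univ_succ]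

lemma invNum_wrev (M : ℕ) (w : Fin M → ℕ) :
    (invNum M (wrev M w) : ℤ) = ∑ p : Fin M, ∑ q : Fin M, if p < q ∧ w q < w p then 1 else 0 := by
  rw [invNum, Finset.card_filter, Fintype.sum_prod_type, Finset.sum_comm]
  push_cast
  rw [← Equiv.sum_comp Fin.revPerm]
  refine Finset.sum_congr rfl fun p _ => ?_
  rw [← Equiv.sum_comp Fin.revPerm]
  refine Finset.sum_congr rfl fun q _ => ?_
  simp [wrev]

/-- A new first letter `a` of `w` becomes the last letter of `rev w`, so that the new inversions
correspond to the letters smaller than `a`. -/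
lemma invNum_wrev_cons (M a : ℕ) (w : Fin M → ℕ) :
    (invNum (M+1) (wrev (M+1) (Fin.cons a w)) : ℤ) =
      invNum M (wrev M w) + ∑ b ∈ range a, cnt w b := by
  rw [invNum_wrev, invNum_wrev, Fin.sum_univ_succ]
  simp only [Fin.sum_univ_succ, Fin.cons_zero, Fin.cons_succ, Fin.succ_lt_succ_iff, Fin.succ_pos,
    true_and, lt_self_iff_false, false_and, if_false, Fin.not_lt_zero, zero_add, cnt]
  rw [add_comm, Finset.sum_comm (s := range a)]
  congr 1
  refine Finset.sum_congr rfl fun s _ => ?_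
  simp [ev]

/-- The product `∏_s L^{j_s,ℓ_s}_{I^{s-1},I^s}(t^{s-1} x)`, without any condition on the occupation vectors
`I^s`. -/
def WW (n M : ℕ) (I : ℕ → ℤ) (j l : Fin M → ℕ) (x : LR) : LR :=
  ∏ s : Fin M, vw n (I + ∑ r : Fin M, if r < s then ev (j r) - ev (l r) else 0) (j s) (l s)
    (𝐓 ((s : ℕ) : ℤ) * x)

lemma WW_cons (n M : ℕ) (I : ℕ → ℤ) (a b : ℕ) (j l : Fin M → ℕ) (x : LR) :
    WW n (M+1) I (Fin.cons a j) (Fin.cons b l) x =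
      vw n I a b x * WW n M (I + ev a - ev b) j l (𝐓 1 * x) := by
  rw [WW, Fin.prod_univ_succ, WW]
  refine congrArg₂ (fun u v : LR => u * v) ?_ (Finset.prod_congr rfl fun s _ => ?_)
  · simp
  · simp only [Fin.cons_succ, Fin.sum_univ_succ, Fin.succ_pos, Fin.cons_zero, if_true,
      Fin.succ_lt_succ_iff]
    refine congrArg₂ (fun u v => vw n u (j s) (l s) v) ?_ ?_
    · abel
    · rw [← mul_assoc, ← LaurentPolynomial.T_add]; simp

/-- The sum of `t^{-𝓘(rev j)} ∏_s L^{j_s,ℓ_s}_{I^{s-1},I^s}(t^{s-1} x)` over the words `j`, `ℓ` of length `M` with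
contents `λ` and `μ`, where the number of letters `0` is prescribed too. It is `0` if there are no such
words, in particular if `λ` or `μ` has a negative entry. -/
def ZZ (n M : ℕ) (lam mu I : ℕ → ℤ) (x : LR) : LR :=
  ∑ j ∈ words n M, ∑ l ∈ words n M,
    if (∀ a ≤ n, cnt j a = lam a) ∧ (∀ a ≤ n, cnt l a = mu a) then
      𝐓 (-(invNum M (wrev M j) : ℤ)) * WW n M I j l x else 0

lemma ZZ_succ (n M : ℕ) (lam mu I : ℕ → ℤ) (x : LR) :
    ZZ n (M+1) lam mu I x = ∑ l ∈ range (n+1), ∑ j ∈ range (n+1),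
      𝐓 (-∑ a ∈ range j, lam a) * vw n I j l x *
        ZZ n M (lam - ev j) (mu - ev l) (I + ev j - ev l) (𝐓 1 * x) := by
  rw [ZZ, sum_words_succ, Finset.sum_comm (s := range (n+1)) (t := range (n+1))]
  refine Finset.sum_congr rfl fun a ha => ?_
  rw [Finset.mem_range] at ha
  simp only [sum_words_succ]
  rw [Finset.sum_comm]
  refine Finset.sum_congr rfl fun b hb => ?_
  rw [ZZ, Finset.mul_sum]
  refine Finset.sum_congr rfl fun j hj => ?_
  rw [Finset.mul_sum]
  refine Finset.sum_congr rfl fun l hl => ?_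
  have e : ∀ (c : ℕ) {w : Fin M → ℕ} {nu : ℕ → ℤ},
      (∀ a ≤ n, cnt (Fin.cons c w : Fin (M+1) → ℕ) a = nu a) ↔ (∀ a ≤ n, cnt w a = (nu - ev c) a) := by
    intro c w nu
    refine forall_congr' fun a => forall_congr' fun _ => ?_
    rw [cnt_cons, Pi.add_apply, Pi.sub_apply]
    constructor <;> intro h <;> omega
  simp only [e]
  split_ifs with hc
  · rw [invNum_wrev_cons, WW_cons]
    have : ∑ c ∈ range a, cnt j c = ∑ c ∈ range a, lam c := by
      refine Finset.sum_congr rfl fun c hca => ?_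
      rw [Finset.mem_range] at hca
      rw [hc.1 c (by omega)]
      simp [ev_ne (show c ≠ a by omega)]
    rw [this, neg_add, LaurentPolynomial.T_add]
    ring
  · simp

lemma cnt_nonneg {M : ℕ} (w : Fin M → ℕ) (a : ℕ) : 0 ≤ cnt w a :=
  Finset.sum_nonneg fun s _ => by simp only [ev]; split_ifs <;> simp

lemma ZZ_eq_zero {n M : ℕ} {lam mu I : ℕ → ℤ} {x : LR} {a : ℕ} (ha : a ≤ n)
    (h : lam a < 0 ∨ mu a < 0) : ZZ n M lam mu I x = 0 := by
  refine Finset.sum_eq_zero fun j _ => Finset.sum_eq_zero fun l _ => if_neg fun hc => ?_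
  have h1 := hc.1 a ha
  have h2 := hc.2 a ha
  have := cnt_nonneg j a
  have := cnt_nonneg l a
  omega

/-! ### Evaluation of the sum over words -/

/-- The factorial `(m)! = (1 - t^{-1}) (1 - t^{-2}) ⋯ (1 - t^{-m})`. -/
def qf (m : ℕ) : LR := ∏ i ∈ range m, (1 - 𝐓 (-((i : ℤ) + 1)))

/-- The product `(λ_0)! (λ_1)! ⋯ (λ_n)!`. -/
def qP (n : ℕ) (lam : ℕ → ℤ) : LR := ∏ a ∈ range (n+1), qf (lam a).toNat

lemma qP_peel {n j : ℕ} (hj : j ≤ n) {lam : ℕ → ℤ} (h : 1 ≤ lam j) :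
    qP n lam = (1 - 𝐓 (-lam j)) * qP n (lam - ev j) := by
  rw [qP, qP, ← Finset.mul_prod_erase _ _ (Finset.mem_range.2 (by omega : j < n + 1)),
    ← Finset.mul_prod_erase (range (n+1)) (fun a => qf ((lam - ev j) a).toNat)
      (Finset.mem_range.2 (by omega : j < n + 1)), ← mul_assoc]
  congr 1
  · simp only [Pi.sub_apply, ev_same]
    rw [show (lam j).toNat = (lam j - 1).toNat + 1 by omega, qf, Finset.prod_range_succ, mul_comm]
    congr 3
    omega
  · refine Finset.prod_congr rfl fun a ha => ?_
    simp [ev_ne (Finset.ne_of_mem_erase ha)]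

lemma qf_ne_zero (m : ℕ) : qf m ≠ 0 := by
  refine Finset.prod_ne_zero_iff.2 fun i _ h => ?_
  rw [sub_eq_zero, ← LaurentPolynomial.T_zero] at h
  have := congrArg LaurentPolynomial.degree h
  rw [LaurentPolynomial.degree_T, LaurentPolynomial.degree_T, WithBot.coe_inj] at this
  omega

lemma qP_ne_zero (n : ℕ) (lam : ℕ → ℤ) : qP n lam ≠ 0 :=
  Finset.prod_ne_zero_iff.2 fun _ _ => qf_ne_zero _

lemma sum_telescope (n : ℕ) (mu : ℕ → ℤ) :
    ∑ l ∈ range n, 𝐓 (-∑ a ∈ range l, mu a) * (1 - 𝐓 (-mu l)) = 1 - 𝐓 (-∑ a ∈ range n, mu a) := by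
  induction n with
  | zero => simp
  | succ n ih =>
    rw [Finset.sum_range_succ, ih, Finset.sum_range_succ, neg_add, LaurentPolynomial.T_add]
    ring

lemma FF_mu_zero {n : ℕ} {lam mu I K : ℕ → ℤ} (x z : LR) (h : ∀ a, 1 ≤ a → a ≤ n → mu a = 0) :
    FF n lam mu I K x z = 1 := by
  induction n generalizing z with
  | zero => rfl
  | succ n ih =>
    have hs : ∑ a ∈ Icc 1 n, mu a = 0 := Finset.sum_eq_zero fun a ha => by
      rw [Finset.mem_Icc] at ha
      exact h a ha.1 (by omega)
    rw [FF, hs, h (n+1) (by omega) le_rfl, ih _ fun a ha hb => h a ha (by omega)]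
    simp [phi_zero]

/-- The sum over words with contents `λ` and `μ` equals `(M)! / ∏_a (λ_a)!` times the explicit weight at
`z = -t^M x`. -/
theorem ZZ_eq {n M : ℕ} (lam mu I K : ℕ → ℤ) (x : LR) (hx : x ≠ 0)
    (hlam : ∑ a ∈ range (n+1), lam a = M) (hmu : ∑ a ∈ range (n+1), mu a = M)
    (hlam0 : ∀ a ≤ n, 0 ≤ lam a) (hmu0 : ∀ a ≤ n, 0 ≤ mu a)
    (h : ∀ a, 1 ≤ a → a ≤ n → 0 ≤ I a ∧ 0 ≤ K a ∧ lam a + I a = mu a + K a) :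
    qP n lam * ZZ n M lam mu I x = qf M * FF n lam mu I K x (-(𝐓 M * x)) := by
  induction M generalizing lam mu I x with
  | zero =>
    have h1 : ∀ nu : ℕ → ℤ, (∑ a ∈ range (n+1), nu a = (0:ℕ)) → (∀ a ≤ n, 0 ≤ nu a) →
        ∀ a ≤ n, nu a = 0 := fun nu h1 h2 a ha => by
      rw [Nat.cast_zero, Finset.sum_eq_zero_iff_of_nonneg] at h1
      · exact h1 a (Finset.mem_range.2 (by omega))
      · intro a ha
        exact h2 a (by rw [Finset.mem_range] at ha; omega)
    have hl := h1 lam hlam hlam0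
    have hm := h1 mu hmu hmu0
    rw [FF_mu_zero _ _ fun a _ ha => hm a ha]
    have : qP n lam = 1 := Finset.prod_eq_one fun a ha => by
      rw [hl a (by rw [Finset.mem_range] at ha; omega)]; simp [qf]
    rw [this, ZZ]
    have hw : words n 0 = {Fin.elim0} := by
      ext w
      simp only [words, Fintype.mem_piFinset, Finset.mem_singleton]
      exact ⟨fun _ => Subsingleton.elim _ _, fun _ s => s.elim0⟩
    rw [hw, Finset.sum_singleton, Finset.sum_singleton, if_pos]
    · simp [WW, invNum, qf]
    · exact ⟨fun a ha => by simp [cnt, hl a ha], fun a ha => by simp [cnt, hm a ha]⟩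
  | succ M ih =>
    have hxx : 𝐓 1 * x ≠ 0 := mul_ne_zero (LaurentPolynomial.isUnit_T 1).ne_zero hx
    have hterm : ∀ l ∈ range (n+1), (∑ j ∈ range (n+1), qP n lam * (𝐓 (-∑ a ∈ range j, lam a) *
        vw n I j l x * ZZ n M (lam - ev j) (mu - ev l) (I + ev j - ev l) (𝐓 1 * x))) =
        qf M * FF n lam mu I K x (-(𝐓 (M+1 : ℕ) * x)) *
          (𝐓 (-∑ a ∈ range l, mu a) * (1 - 𝐓 (-mu l))) := by
      intro l hl
      have hln : l ≤ n := by rw [Finset.mem_range] at hl; omega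
      rcases (hmu0 l hln).eq_or_lt with hml | hml
      · rw [← hml]
        simp only [neg_zero, LaurentPolynomial.T_zero, sub_self, mul_zero]
        refine Finset.sum_eq_zero fun j _ => ?_
        rw [ZZ_eq_zero hln (Or.inr (by simp [ev_same, ← hml]))]
        simp
      · have key := FF_peel_word lam mu I K x hx (M+1 : ℕ) l hln (by omega) hlam hmu
          fun a ha hb => ⟨hmu0 a hb, h a ha hb⟩
        rw [mul_assoc, mul_comm (FF n lam mu I K x _), ← key, Finset.mul_sum]
        refine Finset.sum_congr rfl fun j hj => ?_
        have hjn : j ≤ n := by rw [Finset.mem_range] at hj; omega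
        rcases (hlam0 j hjn).eq_or_lt with hlj | hlj
        · rw [ZZ_eq_zero hjn (Or.inl (by simp [ev_same, ← hlj])), ← hlj]
          simp
        by_cases hv : vw n I j l x = 0
        · rw [hv]; ring
        have hI : ∀ a, 1 ≤ a → a ≤ n → 0 ≤ (I + ev j - ev l) a :=
          fun a ha hb => vw_nonneg hv ha (h a ha hb).1
        -- The contents of the shortened words satisfy the hypotheses of the induction.
        have hsub : ∀ (nu : ℕ → ℤ) (c : ℕ), c ≤ n → (∑ a ∈ range (n+1), nu a = (M+1 : ℕ)) →
            ∑ a ∈ range (n+1), (nu - ev c) a = M := by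
          intro nu c hc hnu
          simp only [Pi.sub_apply, Finset.sum_sub_distrib]
          rw [hnu, sum_ev_mem (Finset.mem_range.2 (by omega))]; simp
        have hnn : ∀ (nu : ℕ → ℤ) (c : ℕ), 0 < nu c → (∀ a ≤ n, 0 ≤ nu a) →
            ∀ a ≤ n, 0 ≤ (nu - ev c) a := by
          intro nu c hc hnu a ha
          have := hnu a ha
          by_cases hac : a = c
          · subst hac; simp only [Pi.sub_apply, ev_same]; omega
          · simp only [Pi.sub_apply, ev_ne hac]; omega
        have IH := ih (lam - ev j) (mu - ev l) (I + ev j - ev l) (𝐓 1 * x) hxx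
          (hsub lam j hjn hlam) (hsub mu l hln hmu) (hnn lam j hlj hlam0) (hnn mu l hml hmu0)
          fun a ha hb => ⟨hI a ha hb, (h a ha hb).2.1, by
            have := (h a ha hb).2.2
            simp only [Pi.sub_apply, Pi.add_apply]; omega⟩
        rw [← mul_assoc (𝐓 (M:ℤ)), ← LaurentPolynomial.T_add] at IH
        rw [qP_peel hjn (by omega : 1 ≤ lam j)]
        push_cast
        linear_combination 𝐓 (-∑ a ∈ range j, lam a) * (1 - 𝐓 (-lam j)) * vw n I j l x * IH
    rw [ZZ_succ, Finset.mul_sum]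
    simp only [Finset.mul_sum]
    rw [Finset.sum_congr rfl hterm, ← Finset.mul_sum, sum_telescope, hmu]
    rw [show qf (M+1) = qf M * (1 - 𝐓 (-(M+1 : ℕ))) by
      rw [qf, Finset.prod_range_succ, ← qf]; push_cast; rfl]
    ring

/-! ### Factorization of the explicit weight -/

lemma gbA_eq (a b : ℕ) : gbA a b = gN a b := by
  rw [gbA, gaussInt, gN]
  split_ifs with h
  · simp
  · rw [map_zero]
    exact (gN_eq_zero (by omega)).symm

lemma kv_snoc_of_le {n i : ℕ} (h1 : 1 ≤ i) (hn : i ≤ n) (κ : Fin n → ℕ) (k : ℕ) :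
    kv (n+1) (Fin.snoc (α := fun _ => ℕ) κ k) i = kv n κ i := by
  rw [kv, kv, dif_pos (by omega), dif_pos (by omega)]
  have : (⟨i - 1, by omega⟩ : Fin (n+1)) = Fin.castSucc ⟨i - 1, by omega⟩ := rfl
  rw [this, Fin.snoc_castSucc]

lemma kv_snoc_last {n : ℕ} (κ : Fin n → ℕ) (k : ℕ) :
    kv (n+1) (Fin.snoc (α := fun _ => ℕ) κ k) (n+1) = k := by
  rw [kv, dif_pos (by omega)]
  have : (⟨n + 1 - 1, by omega⟩ : Fin (n+1)) = Fin.last n := rfl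
  rw [this, Fin.snoc_last]

lemma kv_le {n : ℕ} {mu : ℕ → ℕ} {κ : Fin n → ℕ}
    (hκ : κ ∈ Fintype.piFinset (fun i : Fin n => range (mu ((i : ℕ) + 1) + 1))) {i : ℕ}
    (h1 : 1 ≤ i) (hn : i ≤ n) : kv n κ i ≤ mu i := by
  have := Fintype.mem_piFinset.1 hκ ⟨i - 1, by omega⟩
  rw [Finset.mem_range] at this
  rw [kv, dif_pos (by omega)]
  simp only [show i - 1 + 1 = i by omega] at this
  omega

lemma sum_piFinset_snoc (n : ℕ) (mu : ℕ → ℕ) (f : (Fin (n+1) → ℕ) → LR) :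
    ∑ κ ∈ Fintype.piFinset (fun i : Fin (n+1) => range (mu ((i : ℕ) + 1) + 1)), f κ =
      ∑ k ∈ range (mu (n+1) + 1),
        ∑ κ ∈ Fintype.piFinset (fun i : Fin n => range (mu ((i : ℕ) + 1) + 1)),
          f (Fin.snoc (α := fun _ => ℕ) κ k) := by
  rw [← Finset.sum_product']
  refine Finset.sum_nbij' (fun w => (w (Fin.last n), Fin.init (α := fun _ => ℕ) w))
    (fun p => Fin.snoc (α := fun _ => ℕ) p.2 p.1) ?_ ?_ ?_ ?_ ?_
  · intro w hw
    simp only [Fintype.mem_piFinset, Finset.mem_product] at *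
    exact ⟨hw (Fin.last n), fun s => hw s.castSucc⟩
  · rintro ⟨a, w⟩ hw
    simp only [Fintype.mem_piFinset, Finset.mem_product] at *
    intro s
    refine Fin.lastCases ?_ (fun s => ?_) s
    · simpa using hw.1
    · simpa using hw.2 s
  · intro w _; simp
  · rintro ⟨a, w⟩ _; simp
  · intro w _; simp

lemma two_mul_choose_two (k : ℕ) : (k : ℤ) * k - k = (k.choose 2 : ℕ) * 2 := by
  induction k with
  | zero => simp
  | succ k ih =>
    rw [Nat.choose_succ_succ' k 1, Nat.choose_one_right]
    push_cast
    linarith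

lemma LLexpo_snoc (n : ℕ) (lam mu mu' : ℕ → ℕ) (κ : Fin n → ℕ) (k : ℕ) :
    LLexpo (n+1) lam mu mu' (Fin.snoc (α := fun _ => ℕ) κ k) =
      LLexpo n lam mu mu' κ + (k.choose 2 : ℕ) + (∑ a ∈ Icc 1 n, (mu a : ℤ)) * (mu' (n+1) + k) -
        (∑ a ∈ Icc 1 n, (mu a : ℤ) - ∑ a ∈ Icc 1 n, (kv n κ a : ℤ)) * lam (n+1) := by
  have hk : ∀ a ∈ Icc 1 n, kv (n+1) (Fin.snoc (α := fun _ => ℕ) κ k) a = kv n κ a := fun a ha => by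
    rw [Finset.mem_Icc] at ha
    exact kv_snoc_of_le ha.1 ha.2 κ k
  rw [LLexpo, LLexpo, Finset.sum_Icc_succ_top (by omega), Finset.sum_Icc_succ_top (by omega),
    kv_snoc_last, two_mul_choose_two k, Int.add_mul_ediv_right _ _ (by norm_num),
    show Ico 1 (n+1) = Icc 1 n from rfl]
  have e1 : ∑ i ∈ Icc 1 n, ((kv (n+1) (Fin.snoc (α := fun _ => ℕ) κ k) i : ℤ) *
      kv (n+1) (Fin.snoc (α := fun _ => ℕ) κ k) i - kv (n+1) (Fin.snoc (α := fun _ => ℕ) κ k) i) =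
      ∑ i ∈ Icc 1 n, ((kv n κ i : ℤ) * kv n κ i - kv n κ i) :=
    Finset.sum_congr rfl fun a ha => by rw [hk a ha]
  have e2 : ∑ j ∈ Icc 1 n, ∑ l ∈ Ico 1 j,
      ((mu l : ℤ) * ((mu' j : ℤ) + kv (n+1) (Fin.snoc (α := fun _ => ℕ) κ k) j) -
        ((mu l : ℤ) - kv (n+1) (Fin.snoc (α := fun _ => ℕ) κ k) l) * lam j) =
      ∑ j ∈ Icc 1 n, ∑ l ∈ Ico 1 j,
      ((mu l : ℤ) * ((mu' j : ℤ) + kv n κ j) - ((mu l : ℤ) - kv n κ l) * lam j) := by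
    refine Finset.sum_congr rfl fun j hj => Finset.sum_congr rfl fun l hl => ?_
    rw [hk j hj, hk l (by rw [Finset.mem_Icc, Finset.mem_Ico] at *; omega)]
  have e3 : ∑ l ∈ Icc 1 n,
      ((mu l : ℤ) * ((mu' (n+1) : ℤ) + k) -
        ((mu l : ℤ) - kv (n+1) (Fin.snoc (α := fun _ => ℕ) κ k) l) * lam (n+1)) =
      (∑ a ∈ Icc 1 n, (mu a : ℤ)) * (mu' (n+1) + k) -
        (∑ a ∈ Icc 1 n, (mu a : ℤ) - ∑ a ∈ Icc 1 n, (kv n κ a : ℤ)) * lam (n+1) := by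
    rw [← Finset.sum_sub_distrib, Finset.sum_mul, Finset.sum_mul, ← Finset.sum_sub_distrib]
    exact Finset.sum_congr rfl fun a ha => by rw [hk a ha]
  rw [e1, e2, e3]
  ring

lemma LLmat_eq_FF (n : ℕ) (lam mu lam' mu' : ℕ → ℕ) (x z : LR) :
    LLmat (fun m => 𝐓 m) gbA n lam mu lam' mu' x z =
      FF n (fun a => lam a) (fun a => mu a) (fun a => lam' a) (fun a => mu' a) x z := by
  induction n generalizing z with
  | zero => simp [LLmat, FF, LLexpo]
  | succ n ih =>
    rw [FF, ← ih, phi, LLmat, LLmat, sum_piFinset_snoc]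
    simp only [Int.toNat_natCast]
    rw [Finset.Nat.sum_antidiagonal_eq_sum_range_succ (fun k v =>
      𝐓 ((k.choose 2 : ℕ) : ℤ) * gN (mu' (n+1) + k) k * gN (lam' (n+1)) v *
        (𝐓 (∑ a ∈ Icc 1 n, (mu a : ℤ)) * x) ^ k * z ^ v),
      Finset.mul_sum (s := range (mu (n+1)).succ), Finset.sum_mul (s := range (mu (n+1)).succ)]
    refine Finset.sum_congr rfl fun k hk => ?_
    rw [Finset.mul_sum]
    refine Finset.sum_congr rfl fun κ hκ => ?_
    have hkm : k ≤ mu (n+1) := by rw [Finset.mem_range] at hk; omega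
    have hle : ∑ i ∈ Icc 1 n, kv n κ i ≤ ∑ i ∈ Icc 1 n, mu i := Finset.sum_le_sum fun i hi => by
      rw [Finset.mem_Icc] at hi
      exact kv_le hκ hi.1 hi.2
    have hkv : ∀ a ∈ Icc 1 n, kv (n+1) (Fin.snoc (α := fun _ => ℕ) κ k) a = kv n κ a :=
      fun a ha => by
        rw [Finset.mem_Icc] at ha
        exact kv_snoc_of_le ha.1 ha.2 κ k
    have hprod : ∏ i ∈ Icc 1 n,
        gbA ((mu' i : ℤ) + kv (n+1) (Fin.snoc (α := fun _ => ℕ) κ k) i)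
            (kv (n+1) (Fin.snoc (α := fun _ => ℕ) κ k) i) *
          gbA (lam' i) ((mu i : ℤ) - kv (n+1) (Fin.snoc (α := fun _ => ℕ) κ k) i) =
        ∏ i ∈ Icc 1 n, gbA ((mu' i : ℤ) + kv n κ i) (kv n κ i) *
          gbA (lam' i) ((mu i : ℤ) - kv n κ i) :=
      Finset.prod_congr rfl fun a ha => by rw [hkv a ha]
    rw [LLexpo_snoc, Finset.prod_Icc_succ_top (by omega), Finset.sum_Icc_succ_top (by omega),
      Finset.sum_Icc_succ_top (by omega), kv_snoc_last, hprod, Finset.sum_congr rfl hkv,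
      ← Nat.cast_sub hkm, ← Nat.cast_add, gbA_eq, gbA_eq,
      show ∑ i ∈ Icc 1 n, mu i + mu (n+1) - (∑ i ∈ Icc 1 n, kv n κ i + k) =
        (∑ i ∈ Icc 1 n, mu i - ∑ i ∈ Icc 1 n, kv n κ i) + (mu (n+1) - k) by omega]
    rw [mul_pow z, LaurentPolynomial.T_pow, mul_pow (𝐓 _), LaurentPolynomial.T_pow, pow_add, pow_add]
    push_cast [hle]
    set s := ∑ i ∈ Icc 1 n, (mu i : ℤ)
    set q := ∑ i ∈ Icc 1 n, (kv n κ i : ℤ)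
    have hT : 𝐓 (LLexpo n lam mu mu' κ + (k.choose 2 : ℕ) + s * (mu' (n+1) + k) -
        (s - q) * lam (n+1)) = 𝐓 (LLexpo n lam mu mu' κ) * 𝐓 ((k.choose 2 : ℕ) : ℤ) *
        𝐓 (s * mu' (n+1)) * 𝐓 (k * s) * 𝐓 ((s - q) * -lam (n+1)) := by
      simp only [← LaurentPolynomial.T_add]
      congr 1
      ring
    rw [hT]
    ring

/-! ### Comparison with the fused weight -/

lemma Istep_eq (M : ℕ) (I : ℕ → ℕ) (j l : Fin M → ℕ) (s : Fin M) :
    Istep M I j l s =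
      (fun a => (I a : ℤ)) + ∑ r : Fin M, if r < s then ev (j r) - ev (l r) else 0 := by
  funext a
  rw [Pi.add_apply, Finset.sum_apply, Istep]
  congr 1
  refine Finset.sum_congr rfl fun r _ => ?_
  simp only [Fin.lt_def]
  split_ifs <;> simp_all [ev]

lemma Istep_succ (M : ℕ) (I : ℕ → ℕ) (j l : Fin M → ℕ) (s : Fin M) :
    Istep M I j l ((s : ℕ) + 1) = Istep M I j l s + ev (j s) - ev (l s) := by
  funext a
  rw [Pi.sub_apply, Pi.add_apply, Istep, Istep, add_assoc, add_sub_assoc, add_left_cancel_iff, add_sub_assoc]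
  rw [← sub_eq_iff_eq_add', ← Finset.sum_sub_distrib, Finset.sum_eq_single s]
  · simp [ev]
  · intro r _ hr
    have : (r : ℕ) < (s : ℕ) + 1 ↔ (r : ℕ) < s := by
      have : (r : ℕ) ≠ s := fun h => hr (Fin.ext h)
      omega
    simp only [this, sub_self]
  · simp

lemma WW_eq_prod (n M : ℕ) (I : ℕ → ℕ) (j l : Fin M → ℕ) (x : LR) :
    WW n M (fun a => (I a : ℤ)) j l x =
      ∏ s : Fin M, vw n (Istep M I j l s) (j s) (l s) (𝐓 ((s : ℕ) : ℤ) * x) := by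
  simp only [Istep_eq]
  rfl

/-- The requirement that all `I^s` be nonnegative is automatic: as soon as it fails, one of the vertex
weights vanishes. -/
lemma Pprod_eq_WW {n M : ℕ} {I K : ℕ → ℕ} {j l : Fin M → ℕ} (x : LR)
    (hK : ∀ a ∈ Icc 1 n, Istep M I j l M a = (K a : ℤ)) :
    Pprod (fun m => 𝐓 m) n M j l I K x = WW n M (fun a => (I a : ℤ)) j l x := by
  rw [WW_eq_prod, Pprod]
  split_ifs with hc
  · refine Finset.prod_congr rfl fun s _ => ?_
    rw [Lw, if_pos, vw]
    intro a _
    rw [Istep_succ]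
    simp only [Pi.sub_apply, Pi.add_apply, ev]
    ring
  · by_contra hne
    rw [← Ne, ne_comm, Finset.prod_ne_zero_iff] at hne
    refine hc ⟨fun s => ?_, hK⟩
    induction s with
    | zero => intro _ a _; simp [Istep]
    | succ s ih =>
      intro hs a ha
      rw [Finset.mem_range] at hs
      have h1 := ih (Finset.mem_range.2 (by omega)) a ha
      have h2 := hne ⟨s, by omega⟩ (Finset.mem_univ _)
      have h3 := Istep_succ M I j l ⟨s, by omega⟩
      simp only at h2 h3
      rw [h3]
      exact vw_nonneg h2 (Finset.mem_Icc.1 ha).1 h1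

/-- The content over all colours `0, …, n` of a word of length `M` with `λ_a` letters `a` for `1 ≤ a ≤ n`: the
number of letters `0` is `M - |λ|`. -/
def fullC (n M : ℕ) (lam : ℕ → ℕ) : ℕ → ℤ :=
  fun a => if a = 0 then (M : ℤ) - ∑ b ∈ Icc 1 n, (lam b : ℤ) else lam a

lemma fullC_of_pos {n M : ℕ} {lam : ℕ → ℕ} {a : ℕ} (h : 1 ≤ a) : fullC n M lam a = lam a :=
  if_neg (by omega)

lemma sum_range_eq_Icc (n : ℕ) (f : ℕ → ℤ) :
    ∑ a ∈ range (n+1), f a = f 0 + ∑ a ∈ Icc 1 n, f a := by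
  rw [sum_range_split n 0 (by omega)]; simp

lemma sum_fullC (n M : ℕ) (lam : ℕ → ℕ) : ∑ a ∈ range (n+1), fullC n M lam a = M := by
  rw [sum_range_eq_Icc, Finset.sum_congr rfl fun a ha => fullC_of_pos (Finset.mem_Icc.1 ha).1]
  simp [fullC]

lemma fullC_nonneg {n M : ℕ} {lam : ℕ → ℕ} (h : ∑ a ∈ Icc 1 n, lam a ≤ M) (a : ℕ) :
    0 ≤ fullC n M lam a := by
  rw [fullC]
  split_ifs
  · rw [← Nat.cast_sum]; omega
  · omega

lemma cnt_eq_card {M : ℕ} (w : Fin M → ℕ) (a : ℕ) :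
    cnt w a = (Finset.univ.filter fun s => w s = a).card := by
  rw [Finset.card_filter, cnt]
  push_cast
  exact Finset.sum_congr rfl fun s _ => by simp [ev, eq_comm]

lemma sum_cnt {n M : ℕ} {w : Fin M → ℕ} (hw : w ∈ words n M) :
    ∑ a ∈ range (n+1), cnt w a = M := by
  simp only [cnt]
  rw [Finset.sum_comm, Finset.sum_congr rfl fun s _ =>
    sum_ev_mem (Fintype.mem_piFinset.1 hw s)]
  simp

lemma mem_wrd {n M : ℕ} {lam : ℕ → ℕ} {w : Fin M → ℕ} :
    w ∈ wrd n M lam ↔ w ∈ words n M ∧ ∀ a ≤ n, cnt w a = fullC n M lam a := by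
  refine (@Finset.mem_filter _ _ (_) _ _).trans ?_
  refine and_congr_right fun hw => ⟨fun h => ?_, fun h a ha => ?_⟩
  · have h1 : ∀ a ∈ Icc 1 n, cnt w a = fullC n M lam a := fun a ha => by
      rw [cnt_eq_card, h a ha, fullC_of_pos (Finset.mem_Icc.1 ha).1]
    intro a ha
    rcases Nat.eq_zero_or_pos a with rfl | hp
    · have h2 := sum_cnt hw
      have h3 := sum_fullC n M lam
      rw [sum_range_eq_Icc] at h2 h3
      rw [Finset.sum_congr rfl h1] at h2
      linarith
    · exact h1 a (Finset.mem_Icc.2 ⟨hp, ha⟩)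
  · rw [Finset.mem_Icc] at ha
    have := h a ha.2
    rw [cnt_eq_card, fullC_of_pos ha.1] at this
    exact_mod_cast this

lemma ZZ_eq_sum_wrd (n M : ℕ) (lam mu : ℕ → ℕ) (I : ℕ → ℤ) (x : LR) :
    ZZ n M (fullC n M lam) (fullC n M mu) I x = ∑ j ∈ wrd n M lam, ∑ l ∈ wrd n M mu,
      𝐓 (-(invNum M (wrev M j) : ℤ)) * WW n M I j l x := by
  have hw : ∀ nu, wrd n M nu = (words n M).filter fun w => ∀ a ≤ n, cnt w a = fullC n M nu a := by
    intro nu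
    ext w
    rw [mem_wrd, Finset.mem_filter]
  rw [ZZ, hw, hw, Finset.sum_filter]
  refine Finset.sum_congr rfl fun j _ => ?_
  rw [Finset.sum_filter]
  split_ifs with h
  · refine Finset.sum_congr rfl fun l _ => ?_
    by_cases h2 : ∀ a ≤ n, cnt l a = fullC n M mu a
    · rw [if_pos ⟨h, h2⟩, if_pos h2]
    · rw [if_neg fun hc => h2 hc.2, if_neg h2]
  · exact Finset.sum_eq_zero fun l _ => if_neg fun hc => h hc.1

lemma Istep_last {n M : ℕ} {lam mu lam' mu' : ℕ → ℕ} {j l : Fin M → ℕ}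
    (hcons : ∀ a ∈ Icc 1 n, lam a + lam' a = mu a + mu' a)
    (hj : j ∈ wrd n M lam) (hl : l ∈ wrd n M mu) :
    ∀ a ∈ Icc 1 n, Istep M lam' j l M a = (mu' a : ℤ) := by
  intro a ha
  have hc := hcons a ha
  rw [Finset.mem_Icc] at ha
  have h1 := (mem_wrd.1 hj).2 a ha.2
  have h2 := (mem_wrd.1 hl).2 a ha.2
  rw [fullC_of_pos ha.1] at h1 h2
  rw [Istep]
  simp only [Fin.is_lt, if_true, Finset.sum_sub_distrib]
  simp only [cnt, ev] at h1 h2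
  rw [h1, h2]
  omega

lemma wrd_zero (n M : ℕ) : wrd n M (fun _ => 0) = {fun _ => 0} := by
  ext w
  rw [Finset.mem_singleton]
  refine (@Finset.mem_filter _ _ (_) _ _).trans ?_
  constructor
  · rintro ⟨h1, h2⟩
    funext s
    by_contra hs
    have h3 := Finset.mem_range.1 (Fintype.mem_piFinset.1 h1 s)
    have h4 := h2 (w s) (Finset.mem_Icc.2 ⟨by omega, by omega⟩)
    rw [Finset.card_eq_zero, Finset.filter_eq_empty_iff] at h4
    exact h4 (Finset.mem_univ s) rfl
  · rintro rfl
    refine ⟨Fintype.mem_piFinset.2 fun s => by simp, fun a ha => ?_⟩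
    rw [Finset.mem_Icc] at ha
    rw [Finset.card_eq_zero, Finset.filter_eq_empty_iff]
    intro s _ h
    simp only at h
    omega

/-- `C_M(λ) = (M)! / ∏_a (λ_a)!`, the case `μ = I = 0` of `ZZ_eq`. -/
lemma qP_mul_sum {n M : ℕ} {lam : ℕ → ℕ} (hlam : ∑ a ∈ Icc 1 n, lam a ≤ M) :
    qP n (fullC n M lam) * ∑ j ∈ wrd n M lam, 𝐓 (-(invNum M (wrev M j) : ℤ)) = qf M := by
  have h := ZZ_eq (n := n) (M := M) (fullC n M lam) (fullC n M fun _ => 0) (fun _ => 0)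
    (fun a => lam a) 1 one_ne_zero (sum_fullC _ _ _) (sum_fullC _ _ _)
    (fun a _ => fullC_nonneg hlam a) (fun a _ => fullC_nonneg (by simp) a)
    (fun a ha _ => ⟨le_rfl, by simp, by rw [fullC_of_pos ha, fullC_of_pos ha]; simp⟩)
  rw [FF_mu_zero _ _ fun a ha _ => by rw [fullC_of_pos ha]; simp, mul_one, ZZ_eq_sum_wrd,
    wrd_zero] at h
  simpa only [Finset.sum_singleton, WW, vw, if_true, Finset.prod_const_one, mul_one] using h

theorem statement16 (n M : ℕ) (hn : 1 ≤ n) (hM : 1 ≤ M) (lam mu lam' mu' : ℕ → ℕ)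
    (hcons : ∀ a ∈ Finset.Icc 1 n, lam a + lam' a = mu a + mu' a)
    (hlam : ∑ a ∈ Finset.Icc 1 n, lam a ≤ M)
    (hmu : ∑ a ∈ Finset.Icc 1 n, mu a ≤ M) :
    (∑ j ∈ wrd n M lam, LaurentPolynomial.T (-(invNum M (wrev M j) : ℤ))) *
        LLmat (R := LaurentPolynomial (Polynomial ℤ)) (fun m => LaurentPolynomial.T m) gbA n lam mu lam' mu'
          (LaurentPolynomial.C Polynomial.X)
          (-(LaurentPolynomial.T (M : ℤ) * LaurentPolynomial.C Polynomial.X)) =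
      ∑ j ∈ wrd n M lam, ∑ l ∈ wrd n M mu,
        LaurentPolynomial.T (-(invNum M (wrev M j) : ℤ)) *
          Pprod (R := LaurentPolynomial (Polynomial ℤ)) (fun m => LaurentPolynomial.T m) n M j l lam' mu'
            (LaurentPolynomial.C Polynomial.X) := by
  -- Only `x ≠ 0` matters for the argument.
  have hx : (LaurentPolynomial.C Polynomial.X : LR) ≠ 0 := by
    intro h
    have := congrArg (fun f : LR => f.coeff 0) h
    simp at this
  generalize (LaurentPolynomial.C Polynomial.X : LR) = x at hx ⊢
  have hR : ∑ j ∈ wrd n M lam, ∑ l ∈ wrd n M mu, 𝐓 (-(invNum M (wrev M j) : ℤ)) *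
      Pprod (fun m => 𝐓 m) n M j l lam' mu' x =
      ZZ n M (fullC n M lam) (fullC n M mu) (fun a => (lam' a : ℤ)) x := by
    rw [ZZ_eq_sum_wrd]
    refine Finset.sum_congr rfl fun j hj => Finset.sum_congr rfl fun l hl => ?_
    rw [Pprod_eq_WW x (Istep_last hcons hj hl)]
  rw [hR]
  apply mul_left_cancel₀ (qP_ne_zero n (fullC n M lam))
  rw [← mul_assoc, qP_mul_sum hlam, LLmat_eq_FF,
    ZZ_eq (fullC n M lam) (fullC n M mu) (fun a => lam' a) (fun a => mu' a) x hx (sum_fullC _ _ _)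
      (sum_fullC _ _ _) (fun a _ => fullC_nonneg hlam a) (fun a _ => fullC_nonneg hmu a) fun a ha hb => ?_,
    FF_congr _ _ _ fun a ha _ => ⟨(fullC_of_pos ha).symm, (fullC_of_pos ha).symm, rfl⟩]
  rw [fullC_of_pos ha, fullC_of_pos ha]
  have := hcons a (Finset.mem_Icc.2 ⟨ha, hb⟩)
  exact ⟨Nat.cast_nonneg _, Nat.cast_nonneg _, by exact_mod_cast this⟩
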